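/- Let d ≥ 3 be an integer, r > 0, n > 0, P ∈ Π_n^d, and let ν be a quadrature measure of order 2(d+2)n on S^d. Then σ_{d;n,r}(ν, P) = P and σ̃_{d;n,r}(ν, P) = P identically on S^d. -/

import Mathlib

noncomputable section

open MeasureTheory Real Set
open scoped RealInnerProductSpace

/-- Value at `x` of the orthonormalized Jacobi polynomial `p_n^{(α,β)}`. -/
def jacobiP (α β : ℝ) (n : ℕ) (x : ℝ) : ℝ :=
  Real.sqrt ((2 * (n : ℝ) + α + β + 1) / 2 ^ (α + β + 1) *
      (Real.Gamma ((n : ℝ) + α + β + 1) * (n.factorial : ℝ) /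
        (Real.Gamma ((n : ℝ) + α + 1) * Real.Gamma ((n : ℝ) + β + 1)))) *
    (Real.Gamma (α + n + 1) / ((n.factorial : ℝ) * Real.Gamma (α + β + n + 1))) *
    ∑ m ∈ Finset.range (n + 1),
      (n.choose m : ℝ) * (Real.Gamma (α + β + n + m + 1) / Real.Gamma (α + m + 1)) *
        ((x - 1) / 2) ^ m

/-- The kernel `K_n^{(α,β)}(x) = Σ_{ℓ<n} p_ℓ^{(α,β)}(1) p_ℓ^{(α,β)}(x)`. -/
def jacobiK (α β : ℝ) (n : ℕ) (x : ℝ) : ℝ :=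
  ∑ ℓ ∈ Finset.range n, jacobiP α β ℓ 1 * jacobiP α β ℓ x

/-- The unit sphere `S^d ⊂ ℝ^{d+1}`. -/
abbrev Sph (d : ℕ) := Metric.sphere (0 : EuclideanSpace ℝ (Fin (d + 1))) 1

/-- The rotation invariant Riemannian volume probability measure `μ_d^*` on `S^d`. -/
def sphMeasure (d : ℕ) : Measure (Sph d) :=
  ((volume : Measure (EuclideanSpace ℝ (Fin (d + 1)))).toSphere Set.univ)⁻¹ •
    (volume : Measure (EuclideanSpace ℝ (Fin (d + 1)))).toSphere

/-- `f : S^d → ℝ` is the restriction to the sphere of an algebraic polynomial in `d+1`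
variables of total degree `< n`, i.e. `f ∈ Π_n^d`. -/
def IsSphPoly (d : ℕ) (n : ℝ) (f : Sph d → ℝ) : Prop :=
  ∃ p : MvPolynomial (Fin (d + 1)) ℝ, (p.totalDegree : ℝ) < n ∧
    ∀ y : Sph d, f y = MvPolynomial.eval (fun i => (y : EuclideanSpace ℝ (Fin (d + 1))) i) p

/-- Integral of `f` with respect to a signed measure (via the Jordan decomposition). -/
def sInt {X : Type*} [MeasurableSpace X] (ν : SignedMeasure X) (f : X → ℝ) : ℝ :=
  (∫ x, f x ∂ν.toJordanDecomposition.posPart) - ∫ x, f x ∂ν.toJordanDecomposition.negPart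

/-- Integral of `f` over a set `s` with respect to a signed measure. -/
def sIntOn {X : Type*} [MeasurableSpace X] (ν : SignedMeasure X) (s : Set X) (f : X → ℝ) : ℝ :=
  (∫ x in s, f x ∂ν.toJordanDecomposition.posPart) -
    ∫ x in s, f x ∂ν.toJordanDecomposition.negPart

/-- `ν` is a quadrature measure of order `n` on `S^d`. -/
def IsQuadrature (d : ℕ) (n : ℝ) (ν : SignedMeasure (Sph d)) : Prop :=
  ∀ f : Sph d → ℝ, IsSphPoly d n f → sInt ν f = ∫ y, f y ∂sphMeasure d

/-- `ν` satisfies the Marcinkiewicz-Zygmund inequality of order `n` with constant `c`;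
`ν ∈ MZ(d;n)` means this holds for some `c`, and `|||ν|||_{d;n}` is the least such `c`. -/
def IsMZ (d : ℕ) (n : ℝ) (ν : SignedMeasure (Sph d)) (c : ℝ) : Prop :=
  ∀ f : Sph d → ℝ, IsSphPoly d (n / 2) f →
    (∫ y, (f y) ^ 2 ∂ν.totalVariation) ≤ c * ∫ y, (f y) ^ 2 ∂sphMeasure d

/-- `ω_d`, the volume of `S^d`. -/
def omegaS (d : ℕ) : ℝ := 2 * Real.pi ^ (((d : ℝ) + 1) / 2) / Real.Gamma (((d : ℝ) + 1) / 2)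

/-- The reproducing kernel `K_{d;n}` of `Π_n^d`. -/
def sphK (d n : ℕ) (x : ℝ) : ℝ :=
  (omegaS d / omegaS (d - 1)) * jacobiK ((d : ℝ) / 2 - 1) ((d : ℝ) / 2 - 1) n x

/-- The kernel `Φ̃_{d;n,r}`. -/
def PhiTilde (d n : ℕ) (r : ℝ) (x : ℝ) : ℝ :=
  sphK d ((d + 2) * n) x *
    (jacobiP ((d : ℝ) / 2 + r) ((d : ℝ) / 2 - 2) (d * n) x /
      jacobiP ((d : ℝ) / 2 + r) ((d : ℝ) / 2 - 2) (d * n) 1)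

/-- The kernel `Φ_{d;n,r}`. -/
def Phi (d n : ℕ) (r : ℝ) (x : ℝ) : ℝ := PhiTilde d n r x * ((1 + x) / 2) ^ n

/-- The inner product `x·y` of two points of `S^d`. -/
def ip {d : ℕ} (x y : Sph d) : ℝ :=
  ⟪(x : EuclideanSpace ℝ (Fin (d + 1))), (y : EuclideanSpace ℝ (Fin (d + 1)))⟫

/-- The operator `σ_{d;n,r}(ν, f)`. -/
def sigmaOp (d n : ℕ) (r : ℝ) (ν : SignedMeasure (Sph d)) (f : Sph d → ℝ) (x : Sph d) : ℝ :=
  sInt ν (fun y => f y * Phi d n r (ip x y))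

/-- The operator `σ̃_{d;n,r}(ν, f)`. -/
def sigmaTildeOp (d n : ℕ) (r : ℝ) (ν : SignedMeasure (Sph d)) (f : Sph d → ℝ) (x : Sph d) : ℝ :=
  sInt ν (fun y => f y * PhiTilde d n r (ip x y))

/-- The uniform (supremum) norm `‖f‖_∞`. -/
def supNorm {X : Type*} (f : X → ℝ) : ℝ := sSup (Set.range fun x => |f x|)

/-- `E_{d;n}(f)`, the degree of approximation of `f` from `Π_n^d` in the uniform norm. -/
def bestApprox (d : ℕ) (n : ℝ) (f : Sph d → ℝ) : ℝ :=
  sInf {t | ∃ g, IsSphPoly d n g ∧ ∀ y, |f y - g y| ≤ t}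

/-- `dim Π_n^d = (2n+d−2)·Γ(n+d−1)/(Γ(n)·Γ(d+1))` (for `n ≥ 2`). -/
def dimPi (d n : ℕ) : ℝ :=
  (2 * (n : ℝ) + d - 2) * Real.Gamma ((n : ℝ) + d - 1) /
    (Real.Gamma n * Real.Gamma ((d : ℝ) + 1))

/-!
For `P ∈ Π_n` and a point `x`, both kernels have the form `K_{d;N}(x·y) q(x·y)` with
`N = (d + 2) n`, `deg q ≤ (d + 1) n` and `q(1) = 1`. Hence `f(y) = P(y) q(x·y)` lies in `Π_N` and
takes the value `P(x)` at `x`. Since `f · K_{d;N}(x·)` has degree below `2N`, the quadrature measure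
may be replaced by `μ_d^*`, and it remains to see that `K_{d;N}` reproduces `Π_N` at `x`.

In orthonormal coordinates whose first axis is `x`, it suffices to test monomials. Gaussian
integration in polar coordinates gives all their moments; a monomial which is odd in one of the
other coordinates contributes nothing, while one of even total degree `2s` in these coordinates
reduces to a Gegenbauer integral of a polynomial in `t = x·y` times `(1 - t²)^s`. There the
reproducing property of `K_N^{(α,α)}` at `t = 1` follows from the orthonormality of the Jacobi
polynomials, which in turn is a Chu–Vandermonde summation.
-/

open Polynomial (X C)
open scoped Polynomial

theorem sum_choose_mul_neg_one_pow_mul_Gamma_div_Gamma (n : ℕ) {a b : ℝ} (ha : 0 < a)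
    (hb : 0 < b) :
    ∑ m ∈ Finset.range (n + 1), (n.choose m : ℝ) * ((-1) ^ m * (Gamma (a + m) / Gamma (b + m))) =
      Gamma a * (ascPochhammer ℝ n).eval (b - a) / Gamma (b + n) := by
  induction n generalizing a b with
  | zero => simp
  | succ n ih =>
    have ih' := ih (a := a + 1) (b := b + 1) (by positivity) (by positivity)
    have hshift (c : ℝ) (m : ℕ) : c + 1 + m = c + (m + 1 : ℕ) := by push_cast; ring
    have hΓ : Gamma (b + n) ≠ 0 := (Gamma_pos_of_pos (by positivity)).ne'
    simp only [hshift, add_sub_add_right_eq_sub] at ih'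
    rw [Finset.sum_choose_succ_mul
      (fun m _ => (-1 : ℝ) ^ m * (Gamma (a + m) / Gamma (b + m))) n]
    simp only [pow_succ, mul_one, neg_mul, mul_neg, Finset.sum_neg_distrib]
    rw [ih ha hb, ih', ascPochhammer_succ_eval, Gamma_add_one ha.ne', ← hshift, add_right_comm,
      Gamma_add_one (by positivity)]
    field_simp
    ring

section JacobiMeasure

theorem integral_Ioo_rpow_mul_one_sub_rpow {u v : ℝ} (hu : 0 < u) (hv : 0 < v) :
    ∫ x in Ioo (0 : ℝ) 1, x ^ (u - 1) * (1 - x) ^ (v - 1) = ProbabilityTheory.beta u v := by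
  rw [ProbabilityTheory.beta_eq_betaIntegralReal u v hu hv, Complex.betaIntegral,
    intervalIntegral.integral_of_le zero_le_one, integral_Ioc_eq_integral_Ioo]
  rw [setIntegral_congr_fun (g := fun x : ℝ => ((x ^ (u - 1) * (1 - x) ^ (v - 1) : ℝ) : ℂ))
    measurableSet_Ioo, integral_complex_ofReal, Complex.ofReal_re]
  rintro x ⟨hx0, hx1⟩
  push_cast
  rw [Complex.ofReal_cpow hx0.le, Complex.ofReal_cpow (by linarith)]
  push_cast
  rfl

/-- The measure `(1 - t)^α (1 + t)^β dt` on `(-1, 1)` for which the Jacobi polynomials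
`p_n^{(α,β)}` are orthonormal. -/
def jacobiMeasure (α β : ℝ) : Measure ℝ :=
  (volume.restrict (Ioo (-1) 1)).withDensity fun t => ENNReal.ofReal ((1 - t) ^ α * (1 + t) ^ β)

theorem integral_jacobiMeasure (α β : ℝ) (f : ℝ → ℝ) :
    ∫ t, f t ∂jacobiMeasure α β = ∫ t in Ioo (-1) 1, (1 - t) ^ α * (1 + t) ^ β * f t := by
  rw [jacobiMeasure, integral_withDensity_eq_integral_toReal_smul (by fun_prop) (by simp)]
  refine setIntegral_congr_fun measurableSet_Ioo fun t ht => ?_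
  have h1 : 0 ≤ 1 - t := by linarith [ht.2]
  have h2 : 0 ≤ 1 + t := by linarith [ht.1]
  simp only [smul_eq_mul,
    ENNReal.toReal_ofReal (mul_nonneg (rpow_nonneg h1 α) (rpow_nonneg h2 β))]

theorem integral_pow_mul_pow_jacobiMeasure {α β : ℝ} (hα : -1 < α) (hβ : -1 < β) (i j : ℕ) :
    ∫ t, ((1 - t) / 2) ^ i * ((1 + t) / 2) ^ j ∂jacobiMeasure α β =
      2 ^ (α + β + 1) * ProbabilityTheory.beta (β + j + 1) (α + i + 1) := by
  have hαi : 0 < α + i + 1 := by linarith [Nat.cast_nonneg (α := ℝ) i]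
  have hβj : 0 < β + j + 1 := by linarith [Nat.cast_nonneg (α := ℝ) j]
  have hsub := intervalIntegral.mul_integral_comp_mul_sub
    (f := fun t : ℝ => (1 - t) ^ α * (1 + t) ^ β * (((1 - t) / 2) ^ i * ((1 + t) / 2) ^ j))
    (a := 0) (b := 1) 2 1
  norm_num only at hsub
  rw [intervalIntegral.integral_of_le (by simp), intervalIntegral.integral_of_le (by norm_num),
    integral_Ioc_eq_integral_Ioo, integral_Ioc_eq_integral_Ioo] at hsub
  rw [integral_jacobiMeasure, ← hsub, ← integral_Ioo_rpow_mul_one_sub_rpow hβj hαi,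
    ← integral_const_mul, ← integral_const_mul]
  refine setIntegral_congr_fun measurableSet_Ioo ?_
  rintro x ⟨hx0, hx1⟩
  have h1x : 0 < 1 - x := sub_pos.mpr hx1
  have e1 : 1 - (2 * x - 1) = 2 * (1 - x) := by ring
  have e2 : 1 + (2 * x - 1) = 2 * x := by ring
  simp only [e1, e2, mul_div_cancel_left₀ _ (two_ne_zero' ℝ), add_sub_cancel_right,
    mul_rpow zero_le_two h1x.le, mul_rpow zero_le_two hx0.le, rpow_add zero_lt_two,
    rpow_add hx0, rpow_add h1x, rpow_natCast, rpow_one]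
  ring

theorem isFiniteMeasure_jacobiMeasure {α β : ℝ} (hα : -1 < α) (hβ : -1 < β) :
    IsFiniteMeasure (jacobiMeasure α β) := by
  have h : ∫ _, (1 : ℝ) ∂jacobiMeasure α β ≠ 0 := by
    have h0 := integral_pow_mul_pow_jacobiMeasure hα hβ 0 0
    simp only [pow_zero, mul_one, Nat.cast_zero, add_zero] at h0
    rw [h0]
    have := ProbabilityTheory.beta_pos (α := β + 1) (β := α + 1) (by linarith) (by linarith)
    positivity
  simpa [integrable_const_iff] using Integrable.of_integral_ne_zero h

theorem integrable_eval_jacobiMeasure {α β : ℝ} (hα : -1 < α) (hβ : -1 < β) (q : ℝ[X]) :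
    Integrable (fun t => q.eval t) (jacobiMeasure α β) := by
  have := isFiniteMeasure_jacobiMeasure hα hβ
  obtain ⟨C, hC⟩ := isCompact_Icc.exists_bound_of_continuousOn (s := Icc (-1 : ℝ) 1)
    q.continuous.continuousOn
  refine Integrable.of_bound q.continuous.aestronglyMeasurable C ?_
  refine (withDensity_absolutelyContinuous _ _).ae_le ?_
  exact (ae_restrict_mem measurableSet_Ioo).mono fun t ht => hC t (Ioo_subset_Icc_self ht)

theorem integral_comp_sq (f : ℝ → ℝ) :
    ∫ t, f (t ^ 2) = ∫ u in Ioi (0 : ℝ), u ^ (-(1 / 2) : ℝ) * f u := by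
  have habs := integral_comp_abs (f := fun t => f (t ^ 2))
  simp only [sq_abs] at habs
  rw [habs, ← integral_const_mul, ← integral_comp_rpow_Ioi_of_pos
    (g := fun u => u ^ (-(1 / 2) : ℝ) * f u) zero_lt_two]
  refine setIntegral_congr_fun measurableSet_Ioi fun t (ht : 0 < t) => ?_
  have hinv : t * (t ^ 2) ^ (-(1 / 2) : ℝ) = 1 := by
    rw [rpow_neg (sq_nonneg t), ← sqrt_eq_rpow, sqrt_sq ht.le, mul_inv_cancel₀ ht.ne']
  norm_num only [rpow_one, rpow_two, smul_eq_mul]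
  linear_combination (-2 * f (t ^ 2)) * hinv

theorem integral_pow_mul_one_sub_sq_pow_of_even {α : ℝ} (hα : -1 < α) (s : ℕ) {k : ℕ}
    (hk : Even k) :
    ∫ t, t ^ k * (1 - t ^ 2) ^ s ∂jacobiMeasure α α =
      ProbabilityTheory.beta (((k : ℝ) + 1) / 2) (α + s + 1) := by
  obtain ⟨m, rfl⟩ := hk.two_dvd
  let f : ℝ → ℝ := (Iio 1).indicator fun u => (1 - u) ^ (α + s) * u ^ m
  have hf : EqOn (fun t : ℝ => (1 - t) ^ α * (1 + t) ^ α * (t ^ (2 * m) * (1 - t ^ 2) ^ s))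
      (fun t => (1 - t ^ 2) ^ (α + s) * (t ^ 2) ^ m) (Ioo (-1) 1) := by
    rintro t ⟨h₁, h₂⟩
    have hpos : 0 < 1 - t ^ 2 := by nlinarith
    dsimp only
    rw [← mul_rpow (by linarith) (by linarith), show (1 - t) * (1 + t) = 1 - t ^ 2 by ring,
      rpow_add hpos, rpow_natCast, pow_mul]
    ring
  calc ∫ t, t ^ (2 * m) * (1 - t ^ 2) ^ s ∂jacobiMeasure α α
      = ∫ t, f (t ^ 2) := by
        rw [integral_jacobiMeasure, setIntegral_congr_fun measurableSet_Ioo hf,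
          ← integral_indicator measurableSet_Ioo]
        simp only [f, indicator, mem_Ioo, mem_Iio, ← abs_lt, sq_lt_one_iff_abs_lt_one]
    _ = ∫ u in Ioi (0 : ℝ), u ^ (-(1 / 2) : ℝ) * f u := integral_comp_sq f
    _ = ∫ u in Ioo 0 1, u ^ (((2 * m : ℕ) + 1 : ℝ) / 2 - 1) * (1 - u) ^ (α + s + 1 - 1) := by
        simp only [f, ← indicator_mul_right _ (fun u : ℝ => u ^ (-(1 / 2) : ℝ))]
        rw [setIntegral_indicator measurableSet_Iio, Ioi_inter_Iio]
        refine setIntegral_congr_fun measurableSet_Ioo fun u hu => ?_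
        have hexp : ((2 * m : ℕ) + 1 : ℝ) / 2 - 1 = -(1 / 2) + m := by push_cast; ring
        simp only [hexp, rpow_add hu.1, rpow_natCast, add_sub_cancel_right]
        ring
    _ = _ := integral_Ioo_rpow_mul_one_sub_rpow (by positivity)
        (by linarith [Nat.cast_nonneg (α := ℝ) s])

theorem integral_eq_zero_of_odd {f : ℝ → ℝ} (hf : f.Odd) : ∫ t, f t = 0 := by
  have h := integral_neg_eq_self f volume
  simp only [hf _, integral_neg] at h
  linarith

theorem integral_jacobiMeasure_eq_zero_of_odd (α : ℝ) {f : ℝ → ℝ} (hf : f.Odd) :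
    ∫ t, f t ∂jacobiMeasure α α = 0 := by
  rw [integral_jacobiMeasure, ← integral_indicator measurableSet_Ioo]
  refine integral_eq_zero_of_odd fun t => ?_
  have hmem : -t ∈ Ioo (-1 : ℝ) 1 ↔ t ∈ Ioo (-1) 1 := by
    simp only [mem_Ioo, ← abs_lt, abs_neg]
  by_cases ht : t ∈ Ioo (-1 : ℝ) 1
  · rw [indicator_of_mem ht, indicator_of_mem (hmem.mpr ht), hf, sub_neg_eq_add, ← sub_eq_add_neg]
    ring
  · rw [indicator_of_notMem ht, indicator_of_notMem (hmem.not.mpr ht), neg_zero]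

end JacobiMeasure

/-- The constant in front of the sum in the definition of `jacobiP`. -/
def jacobiScale (α β : ℝ) (n : ℕ) : ℝ :=
  √((2 * (n : ℝ) + α + β + 1) / 2 ^ (α + β + 1) *
      (Gamma ((n : ℝ) + α + β + 1) * (n.factorial : ℝ) /
        (Gamma ((n : ℝ) + α + 1) * Gamma ((n : ℝ) + β + 1)))) *
    (Gamma (α + n + 1) / ((n.factorial : ℝ) * Gamma (α + β + n + 1)))

/-- The orthonormalized Jacobi polynomial `p_n^{(α,β)}` as a formal polynomial; `jacobiP α β n`
is its evaluation. -/
def jacobiPolynomial (α β : ℝ) (n : ℕ) : ℝ[X] :=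
  C (jacobiScale α β n) * ∑ m ∈ Finset.range (n + 1),
    C ((n.choose m : ℝ) * (Gamma (α + β + n + m + 1) / Gamma (α + m + 1))) *
      (C (1 / 2) * (X - 1)) ^ m

/-- The kernel `K_n^{(α,β)}` as a formal polynomial; `jacobiK α β n` is its evaluation. -/
def jacobiKernelPolynomial (α β : ℝ) (n : ℕ) : ℝ[X] :=
  ∑ ℓ ∈ Finset.range n, C (jacobiP α β ℓ 1) * jacobiPolynomial α β ℓ

section Algebra

variable (α β : ℝ) (n : ℕ)

theorem jacobiP_eq_eval (x : ℝ) : jacobiP α β n x = (jacobiPolynomial α β n).eval x := by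
  simp only [jacobiP, jacobiPolynomial, jacobiScale, Polynomial.eval_mul, Polynomial.eval_C,
    Polynomial.eval_finsetSum, Polynomial.eval_pow, Polynomial.eval_sub, Polynomial.eval_X,
    Polynomial.eval_one, div_eq_inv_mul _ (2 : ℝ), mul_one]

theorem jacobiK_eq_eval (x : ℝ) : jacobiK α β n x = (jacobiKernelPolynomial α β n).eval x := by
  simp only [jacobiK, jacobiKernelPolynomial, jacobiP_eq_eval, Polynomial.eval_finsetSum,
    Polynomial.eval_mul, Polynomial.eval_C]

theorem natDegree_halfSubOne_pow_le (m : ℕ) : ((C (1 / 2 : ℝ) * (X - 1)) ^ m).natDegree ≤ m := by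
  compute_degree

theorem natDegree_jacobiPolynomial_le : (jacobiPolynomial α β n).natDegree ≤ n := by
  refine (Polynomial.natDegree_C_mul_le _ _).trans ?_
  refine Polynomial.natDegree_sum_le_of_forall_le _ _ fun m hm => ?_
  refine (Polynomial.natDegree_C_mul_le _ _).trans ?_
  exact (natDegree_halfSubOne_pow_le m).trans (Finset.mem_range_succ_iff.mp hm)

theorem natDegree_jacobiKernelPolynomial_le : (jacobiKernelPolynomial α β n).natDegree ≤ n :=
  Polynomial.natDegree_sum_le_of_forall_le _ _ fun ℓ hℓ =>
    (Polynomial.natDegree_C_mul_le _ _).trans <|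
      (natDegree_jacobiPolynomial_le α β ℓ).trans (Finset.mem_range.mp hℓ).le

theorem coeff_jacobiPolynomial : (jacobiPolynomial α β n).coeff n =
    jacobiScale α β n * (Gamma (α + β + 2 * n + 1) / Gamma (α + n + 1)) / 2 ^ n := by
  have hlow : ∀ m ∈ Finset.range n,
      (C ((n.choose m : ℝ) * (Gamma (α + β + n + m + 1) / Gamma (α + m + 1))) *
        (C (1 / 2) * (X - 1)) ^ m).coeff n = 0 := fun m hm =>
    Polynomial.coeff_eq_zero_of_natDegree_lt <| (Polynomial.natDegree_C_mul_le _ _).trans_lt <|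
      (natDegree_halfSubOne_pow_le m).trans_lt (Finset.mem_range.mp hm)
  have hlin : (C (1 / 2 : ℝ) * (X - 1)).natDegree ≤ 1 := by compute_degree
  have htop := Polynomial.coeff_pow_of_natDegree_le (m := n) hlin
  rw [mul_one] at htop
  rw [jacobiPolynomial, Polynomial.coeff_C_mul, Finset.sum_range_succ, Polynomial.coeff_add,
    Polynomial.finsetSum_coeff, Finset.sum_eq_zero hlow, Polynomial.coeff_C_mul, htop]
  simp [Polynomial.coeff_one]
  ring_nf

variable {α β n}

theorem jacobiScale_pos (hα : -1 < n + α) (hβ : -1 < n + β) (hαβ : -1 < n + α + β) :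
    0 < jacobiScale α β n := by
  have h₁ : 0 < Gamma (n + α + 1) := Gamma_pos_of_pos (by linarith)
  have h₂ : 0 < Gamma (n + β + 1) := Gamma_pos_of_pos (by linarith)
  have h₃ : 0 < Gamma (n + α + β + 1) := Gamma_pos_of_pos (by linarith)
  have h₄ : 0 < 2 * (n : ℝ) + α + β + 1 := by linarith [Nat.cast_nonneg (α := ℝ) n]
  rw [jacobiScale, add_comm α n, add_comm (α + β) n, ← add_assoc]
  positivity

theorem jacobiScale_sq (hα : -1 < n + α) (hβ : -1 < n + β) (hαβ : -1 < n + α + β) :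
    jacobiScale α β n ^ 2 * (2 ^ (α + β + 1) * n.factorial * Gamma (β + n + 1) *
      Gamma (α + β + n + 1)) = (α + β + 2 * n + 1) * Gamma (α + n + 1) := by
  have h₁ : 0 < Gamma (n + α + 1) := Gamma_pos_of_pos (by linarith)
  have h₂ : 0 < Gamma (n + β + 1) := Gamma_pos_of_pos (by linarith)
  have h₃ : 0 < Gamma (n + α + β + 1) := Gamma_pos_of_pos (by linarith)
  have h₄ : 0 < 2 * (n : ℝ) + α + β + 1 := by linarith [Nat.cast_nonneg (α := ℝ) n]
  rw [jacobiScale, add_comm α n, add_comm β n, add_comm (α + β) n, ← add_assoc, mul_pow,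
    sq_sqrt (by positivity)]
  field_simp
  ring

theorem jacobiP_one_pos (hα : -1 < α) (hβ : -1 < n + β) (hαβ : -1 < n + α + β) :
    0 < jacobiP α β n 1 := by
  have hscale := jacobiScale_pos (by linarith [Nat.cast_nonneg (α := ℝ) n]) hβ hαβ
  have hzero : jacobiP α β n 1 =
      jacobiScale α β n * (Gamma (n + α + β + 1) / Gamma (α + 1)) := by
    rw [jacobiP, ← jacobiScale, Finset.sum_eq_single_of_mem 0 (by simp) (by simp +contextual),
      show (n : ℝ) + α + β + 1 = α + β + n + 1 by ring]
    simp
  rw [hzero]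
  have h₁ : 0 < Gamma (α + 1) := Gamma_pos_of_pos (by linarith)
  have h₂ : 0 < Gamma (n + α + β + 1) := Gamma_pos_of_pos (by linarith)
  positivity

end Algebra

section Orthonormality

variable {α β : ℝ} {n : ℕ}

theorem exists_eq_sum_pow_half_one_add {q : ℝ[X]} (hq : q.natDegree ≤ n) :
    ∃ c : ℕ → ℝ, c n = 2 ^ n * q.coeff n ∧
      ∀ t, q.eval t = ∑ j ∈ Finset.range (n + 1), c j * ((1 + t) / 2) ^ j := by
  refine ⟨fun j => 2 ^ j * (Polynomial.taylor (-1) q).coeff j, ?_, fun t => ?_⟩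
  · rcases hq.eq_or_lt with rfl | hlt
    · simp [Polynomial.coeff_taylor_natDegree]
    · simp [Polynomial.coeff_eq_zero_of_natDegree_lt, hlt]
  · rw [← Polynomial.taylor_eval_sub (-1) q t, Polynomial.eval_eq_sum_range' (n := n + 1)
      (by rw [Polynomial.natDegree_taylor]; omega)]
    refine Finset.sum_congr rfl fun j _ => ?_
    rw [sub_neg_eq_add, add_comm t, div_pow]
    field_simp

theorem integral_jacobiP_mul_pow (hα : -1 < α) (hβ : -1 < β) (hαβ : -1 < α + β) (j : ℕ) :
    ∫ t, jacobiP α β n t * ((1 + t) / 2) ^ j ∂jacobiMeasure α β =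
      jacobiScale α β n * 2 ^ (α + β + 1) * Gamma (β + j + 1) * Gamma (α + β + n + 1) *
        (ascPochhammer ℝ n).eval (j + 1 - n : ℝ) / Gamma (α + β + j + n + 2) := by
  have hterm (t : ℝ) : jacobiP α β n t * ((1 + t) / 2) ^ j =
      ∑ m ∈ Finset.range (n + 1), jacobiScale α β n * (n.choose m : ℝ) *
        (Gamma (α + β + n + m + 1) / Gamma (α + m + 1)) * (-1) ^ m *
          (((1 - t) / 2) ^ m * ((1 + t) / 2) ^ j) := by
    have hneg (m : ℕ) : ((t - 1) / 2) ^ m = (-1) ^ m * ((1 - t) / 2) ^ m := by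
      rw [← mul_pow]; congr 1; ring
    rw [jacobiP, ← jacobiScale, Finset.mul_sum, Finset.sum_mul]
    exact Finset.sum_congr rfl fun m _ => by rw [hneg]; ring
  have hint (m : ℕ) :
      Integrable (fun t : ℝ => ((1 - t) / 2) ^ m * ((1 + t) / 2) ^ j) (jacobiMeasure α β) := by
    convert! integrable_eval_jacobiMeasure hα hβ
      ((C (1 / 2) * (1 - X)) ^ m * (C (1 / 2) * (1 + X)) ^ j) using 2 with t
    simp [div_eq_inv_mul]
  have hvand := sum_choose_mul_neg_one_pow_mul_Gamma_div_Gamma n (a := α + β + n + 1)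
    (b := α + β + j + 2) (by linarith [Nat.cast_nonneg (α := ℝ) n])
    (by linarith [Nat.cast_nonneg (α := ℝ) j])
  rw [show α + β + j + 2 - (α + β + n + 1) = (j + 1 - n : ℝ) by ring, add_right_comm _ 2] at hvand
  simp only [hterm]
  rw [integral_finsetSum _ fun m _ => (hint m).const_mul _, mul_assoc _ (Gamma (α + β + n + 1)),
    mul_div_assoc, ← hvand, Finset.mul_sum]
  refine Finset.sum_congr rfl fun m _ => ?_
  have hΓ : Gamma (α + m + 1) ≠ 0 :=
    (Gamma_pos_of_pos (by linarith [Nat.cast_nonneg (α := ℝ) m])).ne'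
  rw [integral_const_mul, integral_pow_mul_pow_jacobiMeasure hα hβ, ProbabilityTheory.beta,
    show α + β + n + 1 + m = α + β + n + m + 1 by ring,
    show β + j + 1 + (α + m + 1) = α + β + j + 2 + m by ring]
  field_simp

theorem integral_jacobiP_mul_eval (hα : -1 < α) (hβ : -1 < β) (hαβ : -1 < α + β) {q : ℝ[X]}
    (hq : q.natDegree ≤ n) :
    ∫ t, jacobiP α β n t * q.eval t ∂jacobiMeasure α β =
      jacobiScale α β n * 2 ^ (α + β + 1) * Gamma (β + n + 1) * Gamma (α + β + n + 1) *
        n.factorial / Gamma (α + β + 2 * n + 2) * (2 ^ n * q.coeff n) := by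
  obtain ⟨c, hcn, hc⟩ := exists_eq_sum_pow_half_one_add hq
  have hint (j : ℕ) :
      Integrable (fun t => jacobiP α β n t * ((1 + t) / 2) ^ j) (jacobiMeasure α β) := by
    convert! integrable_eval_jacobiMeasure hα hβ
      (jacobiPolynomial α β n * (C (1 / 2) * (1 + X)) ^ j) using 2 with t
    simp [jacobiP_eq_eval, div_eq_inv_mul]
  have hlow : ∀ j ∈ Finset.range n,
      c j * ∫ t, jacobiP α β n t * ((1 + t) / 2) ^ j ∂jacobiMeasure α β = 0 := fun j hj => by
    have hjn := Finset.mem_range.mp hj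
    have hpoch := ascPochhammer_eval_neg_coe_nat_of_lt (R := ℝ) (show n - 1 - j < n by omega)
    rw [Nat.sub_sub, Nat.cast_sub (by omega)] at hpoch
    push_cast at hpoch
    rw [integral_jacobiP_mul_pow hα hβ hαβ,
      show (j + 1 - n : ℝ) = -(n - (1 + j)) by ring, hpoch]
    simp
  simp only [hc, Finset.mul_sum, mul_left_comm _ (c _)]
  rw [integral_finsetSum _ fun j _ => (hint j).const_mul _]
  simp only [integral_const_mul]
  rw [Finset.sum_range_succ, Finset.sum_eq_zero hlow, zero_add, hcn,
    integral_jacobiP_mul_pow hα hβ hαβ, add_sub_cancel_left, ascPochhammer_eval_one]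
  ring_nf

theorem integral_jacobiP_mul_jacobiP (hα : -1 < α) (hβ : -1 < β) (hαβ : -1 < α + β) (m n : ℕ) :
    ∫ t, jacobiP α β m t * jacobiP α β n t ∂jacobiMeasure α β = if m = n then 1 else 0 := by
  wlog hmn : n ≤ m generalizing m n
  · simp only [mul_comm (jacobiP α β m _), eq_comm (a := m), this n m (le_of_not_ge hmn)]
  have hn := natDegree_jacobiPolynomial_le α β n
  simp only [jacobiP_eq_eval α β n]
  rw [integral_jacobiP_mul_eval hα hβ hαβ (hn.trans hmn)]
  rcases hmn.eq_or_lt with rfl | hlt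
  · have := Nat.cast_nonneg (α := ℝ) n
    have hsq := jacobiScale_sq (α := α) (β := β) (n := n) (by linarith) (by linarith) (by linarith)
    have h₁ : Gamma (α + n + 1) ≠ 0 := (Gamma_pos_of_pos (by linarith)).ne'
    have h₂ : α + β + 2 * n + 1 ≠ 0 := by linarith
    have h₃ : Gamma (α + β + 2 * n + 1) ≠ 0 := (Gamma_pos_of_pos (by linarith)).ne'
    rw [coeff_jacobiPolynomial, if_pos rfl,
      show α + β + 2 * n + 2 = α + β + 2 * n + 1 + 1 by ring, Gamma_add_one h₂]
    generalize α + β + 2 * n + 1 = c at *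
    field_simp
    linear_combination hsq
  · rw [Polynomial.coeff_eq_zero_of_natDegree_lt (hn.trans_lt hlt), if_neg hlt.ne']
    ring

theorem degree_jacobiPolynomial (hα : -1 < α) (hβ : -1 < β) (hαβ : -1 < α + β) (n : ℕ) :
    (jacobiPolynomial α β n).degree = n := by
  have := Nat.cast_nonneg (α := ℝ) n
  refine Polynomial.degree_eq_of_le_of_coeff_ne_zero
    (Polynomial.natDegree_le_iff_degree_le.mp (natDegree_jacobiPolynomial_le α β n)) ?_
  have h₁ : 0 < Gamma (α + n + 1) := Gamma_pos_of_pos (by linarith)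
  have h₂ : 0 < Gamma (α + β + 2 * n + 1) := Gamma_pos_of_pos (by linarith)
  have h₃ : 0 < jacobiScale α β n := jacobiScale_pos (by linarith) (by linarith) (by linarith)
  rw [coeff_jacobiPolynomial]
  positivity

theorem integral_jacobiK_mul_eval (hα : -1 < α) (hβ : -1 < β) (hαβ : -1 < α + β) {g : ℝ[X]}
    (hg : g.degree < n) :
    ∫ t, jacobiK α β n t * g.eval t ∂jacobiMeasure α β = g.eval 1 := by
  let S : Polynomial.Sequence ℝ := ⟨jacobiPolynomial α β, degree_jacobiPolynomial hα hβ hαβ⟩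
  have hint (p : ℝ[X]) :
      Integrable (fun t => jacobiK α β n t * p.eval t) (jacobiMeasure α β) := by
    simpa [jacobiK_eq_eval] using
      integrable_eval_jacobiMeasure hα hβ (jacobiKernelPolynomial α β n * p)
  have hspan : g ∈ Submodule.span ℝ (S '' Set.Iio n) := by
    rw [S.span_degreeLT fun ℓ _ => isUnit_iff_ne_zero.mpr
      (Polynomial.leadingCoeff_ne_zero.mpr (S.ne_zero ℓ))]
    exact Polynomial.mem_degreeLT.mpr hg
  clear hg
  induction hspan using Submodule.span_induction with
  | mem p hp =>
    obtain ⟨ℓ, hℓ, rfl⟩ := hp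
    change ∫ t, jacobiK α β n t * (jacobiPolynomial α β ℓ).eval t ∂_ =
      (jacobiPolynomial α β ℓ).eval 1
    have hprod (m : ℕ) :
        Integrable (fun t => jacobiP α β m t * jacobiP α β ℓ t) (jacobiMeasure α β) := by
      simpa [jacobiP_eq_eval] using integrable_eval_jacobiMeasure hα hβ
        (jacobiPolynomial α β m * jacobiPolynomial α β ℓ)
    simp only [← jacobiP_eq_eval, jacobiK, Finset.sum_mul, mul_assoc]
    rw [integral_finsetSum _ fun m _ => (hprod m).const_mul _]
    simp only [integral_const_mul, integral_jacobiP_mul_jacobiP hα hβ hαβ, mul_ite, mul_one,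
      mul_zero, Finset.sum_ite_eq', Finset.mem_range, if_pos (mem_Iio.mp hℓ)]
  | zero => simp
  | add p q _ _ hp hq =>
    simp only [Polynomial.eval_add, mul_add, ← hp, ← hq]
    exact integral_add (hint p) (hint q)
  | smul c p _ hp =>
    simp only [Polynomial.eval_smul, smul_eq_mul, mul_left_comm _ c, ← hp]
    exact integral_const_mul _ _

end Orthonormality

section PolarCoordinates

theorem integral_Ioi_pow_mul_exp_neg_sq (k : ℕ) :
    ∫ x in Ioi (0 : ℝ), x ^ k * exp (-x ^ 2) = Gamma (((k : ℝ) + 1) / 2) / 2 := by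
  have h := integral_rpow_mul_exp_neg_rpow (p := 2) (q := k) two_pos
    (by linarith [Nat.cast_nonneg (α := ℝ) k])
  simp only [rpow_natCast, rpow_ofNat] at h
  rw [h]
  ring

theorem integral_pow_mul_exp_neg_sq_of_even {k : ℕ} (hk : Even k) :
    ∫ x, x ^ k * exp (-x ^ 2) = Gamma (((k : ℝ) + 1) / 2) := by
  have h := integral_comp_abs (f := fun x : ℝ => x ^ k * exp (-x ^ 2))
  simp only [hk.pow_abs, sq_abs] at h
  rw [h, integral_Ioi_pow_mul_exp_neg_sq]
  ring

theorem integral_pow_mul_exp_neg_sq_of_odd {k : ℕ} (hk : Odd k) :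
    ∫ x : ℝ, x ^ k * exp (-x ^ 2) = 0 :=
  integral_eq_zero_of_odd fun x => by rw [hk.neg_pow, neg_sq, neg_mul]

theorem integral_homogeneous_mul_comp_norm {E : Type*} [NormedAddCommGroup E] [NormedSpace ℝ E]
    [FiniteDimensional ℝ E] [MeasurableSpace E] [BorelSpace E] [Nontrivial E] (μ : Measure E)
    [μ.IsAddHaarMeasure] {f : E → ℝ} {k : ℕ} (hf : ∀ (r : ℝ) (y : E), f (r • y) = r ^ k * f y)
    (g : ℝ → ℝ) :
    ∫ y, f y * g ‖y‖ ∂μ = (∫ s : Metric.sphere (0 : E) 1, f s ∂μ.toSphere) *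
      ∫ r in Ioi 0, r ^ (Module.finrank ℝ E - 1 + k) * g r := by
  set m := Module.finrank ℝ E - 1
  have hradial : ∫ r : Ioi (0 : ℝ), (r : ℝ) ^ k * g r ∂.volumeIoiPow m =
      ∫ r in Ioi 0, r ^ (m + k) * g r := by
    simp only [Measure.volumeIoiPow, ENNReal.ofReal]
    rw [integral_withDensity_eq_integral_smul
        (measurable_subtype_coe.pow_const _).real_toNNReal,
      integral_subtype_comap measurableSet_Ioi
        fun r : ℝ => Real.toNNReal (r ^ m) • (r ^ k * g r)]
    refine setIntegral_congr_fun measurableSet_Ioi fun r hr => ?_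
    rw [NNReal.smul_def, coe_toNNReal _ (pow_nonneg hr.out.le _), smul_eq_mul, pow_add, mul_assoc]
  have hpunctured : ∫ y, f y * g ‖y‖ ∂μ =
      ∫ y : ({0}ᶜ : Set E), f y * g ‖(y : E)‖ ∂μ.comap (↑) := by
    rw [integral_subtype_comap (measurableSet_singleton _).compl fun y => f y * g ‖y‖,
      restrict_compl_singleton]
  rw [hpunctured, ← hradial, ← integral_prod_mul,
    ← μ.measurePreserving_homeomorphUnitSphereProd.integral_comp
      (Homeomorph.measurableEmbedding _)]
  refine integral_congr_ae (.of_forall fun y => ?_)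
  have hy : ‖(y : E)‖ ≠ 0 := norm_ne_zero_iff.mpr y.2
  simp only [homeomorphUnitSphereProd_apply_snd_coe, homeomorphUnitSphereProd_apply_fst_coe, hf,
    inv_pow]
  field_simp

end PolarCoordinates

section SphereMoments

theorem prod_repr_smul_pow {ι E : Type*} [Fintype ι] [NormedAddCommGroup E]
    [InnerProductSpace ℝ E] (b : OrthonormalBasis ι ℝ E) (a : ι → ℕ) (r : ℝ) (y : E) :
    ∏ i, b.repr (r • y) i ^ a i = r ^ (∑ i, a i) * ∏ i, b.repr y i ^ a i := by
  simp only [map_smul, PiLp.smul_apply, smul_eq_mul, mul_pow, Finset.prod_mul_distrib,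
    Finset.prod_pow_eq_pow_sum]

variable {ι E : Type*} [Fintype ι] [NormedAddCommGroup E] [InnerProductSpace ℝ E]
  [FiniteDimensional ℝ E] [MeasurableSpace E] [BorelSpace E] (b : OrthonormalBasis ι ℝ E)
  (a : ι → ℕ)

theorem integral_prod_repr_pow_mul_exp_neg_norm_sq :
    ∫ y, (∏ i, b.repr y i ^ a i) * exp (-‖y‖ ^ 2) = ∏ i, ∫ t : ℝ, t ^ a i * exp (-t ^ 2) := by
  have hrepr := b.measurePreserving_repr.integral_comp b.repr.toHomeomorph.measurableEmbedding
    fun z : EuclideanSpace ℝ ι => (∏ i, z i ^ a i) * exp (-‖z‖ ^ 2)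
  have hcoord := (EuclideanSpace.volume_preserving_symm_measurableEquiv_toLp ι).integral_comp
    (MeasurableEquiv.measurableEmbedding _)
    fun z : ι → ℝ => ∏ i, (z i ^ a i * exp (-z i ^ 2))
  simp only [LinearIsometryEquiv.norm_map] at hrepr
  rw [← integral_fintype_prod_volume_eq_prod, ← hcoord, hrepr]
  refine integral_congr_ae (.of_forall fun z => ?_)
  simp [EuclideanSpace.norm_sq_eq, Finset.prod_mul_distrib, ← exp_sum]

variable [Nontrivial E]

theorem integral_toSphere_prod_repr_pow_mul_Gamma :
    (∫ s : Metric.sphere (0 : E) 1, ∏ i, b.repr s i ^ a i ∂(volume : Measure E).toSphere) *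
      Gamma (∑ i, ((a i : ℝ) + 1) / 2) = 2 * ∏ i, ∫ t : ℝ, t ^ a i * exp (-t ^ 2) := by
  have hpolar := integral_homogeneous_mul_comp_norm (f := fun y => ∏ i, b.repr y i ^ a i) volume
    (prod_repr_smul_pow b a) fun r => exp (-r ^ 2)
  have hdim : ((Module.finrank ℝ E - 1 : ℕ) : ℝ) + 1 = Fintype.card ι := by
    rw [← Module.finrank_eq_card_basis b.toBasis]
    exact_mod_cast Nat.sub_add_cancel Module.finrank_pos
  have harg : (((Module.finrank ℝ E - 1 + ∑ i, a i : ℕ) : ℝ) + 1) / 2 =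
      ∑ i, ((a i : ℝ) + 1) / 2 := by
    rw [← Finset.sum_div, Finset.sum_add_distrib, Finset.sum_const, Finset.card_univ, nsmul_one,
      ← hdim]
    push_cast
    ring
  rw [integral_prod_repr_pow_mul_exp_neg_norm_sq, integral_Ioi_pow_mul_exp_neg_sq, harg] at hpolar
  linear_combination -2 * hpolar

variable {a}

theorem integral_toSphere_prod_repr_pow_of_odd {i : ι} (hi : Odd (a i)) :
    ∫ s : Metric.sphere (0 : E) 1, ∏ i, b.repr s i ^ a i ∂(volume : Measure E).toSphere = 0 := by
  have h := integral_toSphere_prod_repr_pow_mul_Gamma b a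
  rw [Finset.prod_eq_zero (Finset.mem_univ i) (integral_pow_mul_exp_neg_sq_of_odd hi),
    mul_zero] at h
  have : Nonempty ι := ⟨i⟩
  refine (mul_eq_zero.mp h).resolve_right (Gamma_pos_of_pos ?_).ne'
  exact Finset.sum_pos (fun i _ => by positivity) Finset.univ_nonempty

theorem integral_toSphere_prod_repr_pow_of_even (ha : ∀ i, Even (a i)) :
    ∫ s : Metric.sphere (0 : E) 1, ∏ i, b.repr s i ^ a i ∂(volume : Measure E).toSphere =
      2 * (∏ i, Gamma (((a i : ℝ) + 1) / 2)) / Gamma (∑ i, ((a i : ℝ) + 1) / 2) := by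
  have : Nonempty ι := b.toBasis.index_nonempty
  rw [eq_div_iff (Gamma_pos_of_pos (Finset.sum_pos (fun i _ => by positivity)
    Finset.univ_nonempty)).ne', integral_toSphere_prod_repr_pow_mul_Gamma]
  simp only [integral_pow_mul_exp_neg_sq_of_even (ha _)]

end SphereMoments

theorem toSphere_real_univ_eq_omegaS (d : ℕ) :
    (volume : Measure (EuclideanSpace ℝ (Fin (d + 1)))).toSphere.real univ = omegaS d := by
  have h := integral_toSphere_prod_repr_pow_of_even (EuclideanSpace.basisFun (Fin (d + 1)) ℝ)
    (a := 0) fun _ => Even.zero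
  simp only [Pi.zero_apply, pow_zero, Finset.prod_const, Finset.sum_const, Finset.card_univ,
    Fintype.card_fin, nsmul_eq_mul, Nat.cast_zero, zero_add, one_pow, integral_const,
    Gamma_one_half_eq, smul_eq_mul, mul_one] at h
  rw [h, omegaS, sqrt_eq_rpow, ← rpow_mul_natCast pi_nonneg]
  push_cast
  ring_nf

theorem omegaS_pos (d : ℕ) : 0 < omegaS d := by
  have : 0 < Gamma (((d : ℝ) + 1) / 2) := Gamma_pos_of_pos (by positivity)
  rw [omegaS]
  positivity

theorem integral_sphMeasure (d : ℕ) (f : Sph d → ℝ) :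
    ∫ y, f y ∂sphMeasure d =
      (∫ y, f y ∂(volume : Measure (EuclideanSpace ℝ (Fin (d + 1)))).toSphere) / omegaS d := by
  rw [sphMeasure, integral_smul_measure, ENNReal.toReal_inv, ← toSphere_real_univ_eq_omegaS,
    smul_eq_mul, div_eq_inv_mul, measureReal_def]

section ReproducingKernel

variable {d : ℕ}

instance isFiniteMeasure_sphMeasure : IsFiniteMeasure (sphMeasure d) := by
  refine ⟨?_⟩
  rw [sphMeasure, Measure.smul_apply, smul_eq_mul,
    ENNReal.inv_mul_cancel (Measure.measure_univ_ne_zero.mpr (Measure.toSphere_ne_zero _))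
      (measure_ne_top _ _)]
  exact ENNReal.one_lt_top

theorem integrable_sphMeasure {f : Sph d → ℝ} (hf : Continuous f) :
    Integrable f (sphMeasure d) :=
  hf.integrable_of_hasCompactSupport (.of_compactSpace f)

variable (b : OrthonormalBasis (Fin (d + 1)) ℝ (EuclideanSpace ℝ (Fin (d + 1))))

theorem integral_eval_repr_zero_mul_prod_of_odd {a : Fin d → ℕ} {i : Fin d} (hi : Odd (a i))
    (g : ℝ[X]) :
    ∫ y : Sph d, g.eval (b.repr y 0) * ∏ i, b.repr y (Fin.succ i) ^ a i ∂sphMeasure d = 0 := by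
  induction g using Polynomial.induction_on' with
  | add p q hp hq =>
    simp only [Polynomial.eval_add, add_mul]
    rw [integral_add (integrable_sphMeasure (by fun_prop)) (integrable_sphMeasure (by fun_prop)),
      hp, hq, add_zero]
  | monomial k c =>
    have h := integral_toSphere_prod_repr_pow_of_odd b (a := Fin.cons k a) (i := i.succ) hi
    simp only [Fin.prod_univ_succ, Fin.cons_zero, Fin.cons_succ] at h
    simp only [Polynomial.eval_monomial, mul_assoc]
    rw [integral_const_mul, integral_sphMeasure, h, zero_div, mul_zero]

theorem integral_eval_repr_zero_mul_prod_of_even (hd : 0 < d) {a : Fin d → ℕ} {s : ℕ}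
    (ha : ∀ i, Even (a i)) (hs : ∑ i, a i = 2 * s) (g : ℝ[X]) :
    ∫ y : Sph d, g.eval (b.repr y 0) * ∏ i, b.repr y (Fin.succ i) ^ a i ∂sphMeasure d =
      2 * (∏ i, Gamma (((a i : ℝ) + 1) / 2)) / (Gamma ((d : ℝ) / 2 + s) * omegaS d) *
        ∫ t, g.eval t * (1 - t ^ 2) ^ s ∂jacobiMeasure ((d : ℝ) / 2 - 1) ((d : ℝ) / 2 - 1) := by
  have hα : -1 < (d : ℝ) / 2 - 1 := by
    have : (0 : ℝ) < d := mod_cast hd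
    linarith
  have hint (p : ℝ[X]) : Integrable (fun t => p.eval t * (1 - t ^ 2) ^ s)
      (jacobiMeasure ((d : ℝ) / 2 - 1) ((d : ℝ) / 2 - 1)) := by
    have h := integrable_eval_jacobiMeasure hα hα (p * (1 - X ^ 2) ^ s)
    simpa using h
  induction g using Polynomial.induction_on' with
  | add p q hp hq =>
    simp only [Polynomial.eval_add, add_mul]
    rw [integral_add (integrable_sphMeasure (by fun_prop)) (integrable_sphMeasure (by fun_prop)),
      integral_add (hint p) (hint q), hp, hq, mul_add]
  | monomial k c =>
    simp only [Polynomial.eval_monomial, mul_assoc, integral_const_mul, integral_sphMeasure]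
    rcases Nat.even_or_odd k with hk | hk
    · have hsum : ∑ i, ((a i : ℝ) + 1) / 2 = d / 2 + s := by
        rw [← Finset.sum_div, Finset.sum_add_distrib, ← Nat.cast_sum, hs]
        simp
        ring
      have h := integral_toSphere_prod_repr_pow_of_even b (a := Fin.cons k a)
        (Fin.cases hk ha)
      simp only [Fin.prod_univ_succ, Fin.sum_univ_succ, Fin.cons_zero, Fin.cons_succ, hsum] at h
      rw [h, integral_pow_mul_one_sub_sq_pow_of_even hα s hk, ProbabilityTheory.beta,
        sub_add_eq_add_sub, sub_add_cancel]
      have := (Gamma_pos_of_pos (show (0 : ℝ) < d / 2 + s by positivity)).ne'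
      field_simp
    · have h := integral_toSphere_prod_repr_pow_of_odd b (a := Fin.cons k a) (i := 0) hk
      simp only [Fin.prod_univ_succ, Fin.cons_zero, Fin.cons_succ] at h
      rw [h, integral_jacobiMeasure_eq_zero_of_odd _ fun t => by
        simp only [hk.neg_pow, neg_sq, neg_mul], zero_div, mul_zero, mul_zero]

theorem omegaS_sub_one (hd : 0 < d) :
    omegaS (d - 1) = 2 * π ^ ((d : ℝ) / 2) / Gamma ((d : ℝ) / 2) := by
  rw [omegaS, Nat.cast_sub hd, Nat.cast_one, sub_add_cancel]

theorem omegaS_div_omegaS_sub_one_mul (hd : 0 < d) :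
    omegaS d / omegaS (d - 1) * (2 * √π ^ d / (Gamma ((d : ℝ) / 2) * omegaS d)) = 1 := by
  have := (omegaS_pos d).ne'
  have := (Gamma_pos_of_pos (show (0 : ℝ) < d / 2 by positivity)).ne'
  rw [omegaS_sub_one hd, sqrt_eq_rpow, ← rpow_mul_natCast pi_nonneg, one_div_mul_eq_div]
  field_simp

theorem integral_pow_mul_jacobiK_mul_one_sub_sq_pow {α : ℝ} (hα : -1 / 2 < α) {n k s : ℕ}
    (h : k + 2 * s < n) :
    ∫ t, t ^ k * jacobiK α α n t * (1 - t ^ 2) ^ s ∂jacobiMeasure α α = 0 ^ s := by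
  have hdeg : (X ^ k * (1 - X ^ 2) ^ s : ℝ[X]).degree < n := by
    rw [mul_comm 2] at h
    refine lt_of_le_of_lt ?_ (Nat.cast_lt.mpr h)
    compute_degree
    exact (Nat.cast_add _ _).ge
  have hreproduce := integral_jacobiK_mul_eval (α := α) (β := α) (by linarith) (by linarith)
    (by linarith) hdeg
  simpa [mul_comm, mul_left_comm, mul_assoc] using hreproduce

/-- The right-hand side is the value of the monomial at the pole `(1, 0, …, 0)`. -/
theorem integral_prod_repr_pow_mul_sphK (hd : 2 ≤ d) {n : ℕ} {a : Fin (d + 1) → ℕ}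
    (ha : ∑ i, a i < n) :
    ∫ y : Sph d, (∏ i, b.repr y i ^ a i) * sphK d n (b.repr y 0) ∂sphMeasure d =
      ∏ i : Fin d, 0 ^ a i.succ := by
  set α := (d : ℝ) / 2 - 1
  have hα : 0 ≤ α := sub_nonneg.mpr ((one_le_div two_pos).mpr (mod_cast hd))
  have hsplit (y : Sph d) : (∏ i, b.repr y i ^ a i) * sphK d n (b.repr y 0) =
      omegaS d / omegaS (d - 1) * ((X ^ a 0 * jacobiKernelPolynomial α α n).eval (b.repr y 0) *
        ∏ i : Fin d, b.repr y i.succ ^ a i.succ) := by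
    rw [Fin.prod_univ_succ, sphK, jacobiK_eq_eval, Polynomial.eval_mul, Polynomial.eval_X_pow]
    ring
  simp only [hsplit, integral_const_mul]
  by_cases hodd : ∃ i : Fin d, Odd (a i.succ)
  · obtain ⟨i, hi⟩ := hodd
    rw [integral_eval_repr_zero_mul_prod_of_odd b (a := fun i => a i.succ) hi, mul_zero,
      Finset.prod_eq_zero (Finset.mem_univ i) (zero_pow hi.pos.ne')]
  simp only [not_exists, Nat.not_odd_iff_even] at hodd
  obtain ⟨s, hs⟩ := Finset.even_sum (s := .univ) _ fun i _ => hodd i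
  rw [← two_mul] at hs
  have hintegral : ∫ t, (X ^ a 0 * jacobiKernelPolynomial α α n).eval t * (1 - t ^ 2) ^ s
      ∂jacobiMeasure α α = 0 ^ s := by
    rw [Fin.sum_univ_succ, hs] at ha
    simpa [← jacobiK_eq_eval] using
      integral_pow_mul_jacobiK_mul_one_sub_sq_pow (show -1 / 2 < α by linarith) ha
  rw [integral_eval_repr_zero_mul_prod_of_even b (by lia) hodd hs, hintegral]
  rcases eq_or_ne s 0 with rfl | hs₀
  · have ha₀ (i : Fin d) : a i.succ = 0 := Finset.sum_eq_zero_iff.mp hs i (Finset.mem_univ i)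
    simpa [ha₀, ← one_div, Gamma_one_half_eq, -one_div] using
      omegaS_div_omegaS_sub_one_mul (d := d) (by lia)
  · have hne : ∑ i : Fin d, a i.succ ≠ 0 := by lia
    rw [Finset.prod_pow_eq_pow_sum, zero_pow hs₀, zero_pow hne, mul_zero, mul_zero]

end ReproducingKernel

section PolynomialFunctions

theorem totalDegree_mvPolynomial_aeval_le {σ τ R : Type*} [CommSemiring R]
    {f : σ → MvPolynomial τ R} {k : ℕ} (hf : ∀ i, (f i).totalDegree ≤ k) (p : MvPolynomial σ R) :
    (MvPolynomial.aeval f p).totalDegree ≤ p.totalDegree * k := by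
  rw [MvPolynomial.aeval_def, MvPolynomial.eval₂_eq]
  refine MvPolynomial.totalDegree_finsetSum_le fun a ha => ?_
  rw [MvPolynomial.algebraMap_eq, ← MvPolynomial.smul_eq_C_mul]
  calc (p.coeff a • ∏ i ∈ a.support, f i ^ a i).totalDegree
      ≤ (∏ i ∈ a.support, f i ^ a i).totalDegree := MvPolynomial.totalDegree_smul_le _ _
    _ ≤ ∑ i ∈ a.support, (f i ^ a i).totalDegree := MvPolynomial.totalDegree_finsetProd _ _
    _ ≤ ∑ i ∈ a.support, a i * k := Finset.sum_le_sum fun i _ =>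
        (MvPolynomial.totalDegree_pow _ _).trans (Nat.mul_le_mul_left _ (hf i))
    _ = (∑ i ∈ a.support, a i) * k := (Finset.sum_mul _ _ _).symm
    _ ≤ p.totalDegree * k := Nat.mul_le_mul_right _ (MvPolynomial.le_totalDegree ha)

theorem totalDegree_polynomial_aeval_le {τ R : Type*} [CommSemiring R] (f : MvPolynomial τ R)
    (p : R[X]) : (Polynomial.aeval f p).totalDegree ≤ p.natDegree * f.totalDegree := by
  rw [Polynomial.aeval_eq_sum_range]
  refine MvPolynomial.totalDegree_finsetSum_le fun i hi => ?_
  calc (p.coeff i • f ^ i).totalDegree ≤ (f ^ i).totalDegree :=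
        MvPolynomial.totalDegree_smul_le _ _
    _ ≤ i * f.totalDegree := MvPolynomial.totalDegree_pow _ _
    _ ≤ p.natDegree * f.totalDegree :=
        Nat.mul_le_mul_right _ (Nat.le_of_lt_succ (Finset.mem_range.mp hi))

theorem exists_mvPolynomial_eval_repr_eq {ι R M : Type*} [Finite ι] [CommRing R]
    [AddCommGroup M] [Module R M] (b : Module.Basis ι R M) (L : M →ₗ[R] R) :
    ∃ q : MvPolynomial ι R, q.totalDegree ≤ 1 ∧ ∀ y, MvPolynomial.eval (b.repr y) q = L y := by
  classical
  have := Fintype.ofFinite ι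
  refine ⟨L.toMvPolynomial b (.singleton Unit R) (),
    LinearMap.toMvPolynomial_totalDegree_le .., fun y => ?_⟩
  rw [LinearMap.toMvPolynomial_eval_eq_apply, LinearEquiv.symm_apply_apply,
    Module.Basis.singleton_repr]

variable {d : ℕ}

theorem IsSphPoly.exists_eval_repr {n : ℝ} {f : Sph d → ℝ} (hf : IsSphPoly d n f)
    (b : OrthonormalBasis (Fin (d + 1)) ℝ (EuclideanSpace ℝ (Fin (d + 1)))) :
    ∃ q : MvPolynomial (Fin (d + 1)) ℝ, (q.totalDegree : ℝ) < n ∧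
      ∀ y : Sph d, f y = MvPolynomial.eval (b.repr y) q := by
  obtain ⟨p, hp, hfp⟩ := hf
  choose coord hdeg hcoord using fun i =>
    exists_mvPolynomial_eval_repr_eq b.toBasis (EuclideanSpace.projₗ (𝕜 := ℝ) i)
  refine ⟨MvPolynomial.aeval coord p, lt_of_le_of_lt (Nat.cast_le.mpr ?_) hp, fun y => ?_⟩
  · simpa using totalDegree_mvPolynomial_aeval_le hdeg p
  · rw [hfp, ← MvPolynomial.coe_aeval_eq_eval, ← MvPolynomial.coe_aeval_eq_eval, RingHom.coe_coe,
      RingHom.coe_coe, MvPolynomial.comp_aeval_apply]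
    exact congrArg (MvPolynomial.aeval · p) (funext fun i => (hcoord i y).symm)

theorem IsSphPoly.mul_eval_ip {n m : ℕ} {f : Sph d → ℝ} (hf : IsSphPoly d n f) {q : ℝ[X]}
    (hq : q.natDegree + n ≤ m) (x : Sph d) : IsSphPoly d m fun y => f y * q.eval (ip x y) := by
  obtain ⟨p, hp, hfp⟩ := hf
  obtain ⟨L, hdeg, hL⟩ := exists_mvPolynomial_eval_repr_eq
    (EuclideanSpace.basisFun (Fin (d + 1)) ℝ).toBasis (innerₛₗ ℝ x.1)
  refine ⟨p * Polynomial.aeval L q, ?_, fun y => ?_⟩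
  · have hqL : (Polynomial.aeval L q).totalDegree ≤ q.natDegree :=
      (totalDegree_polynomial_aeval_le L q).trans (mul_le_of_le_one_right' hdeg)
    have hprod := MvPolynomial.totalDegree_mul p (Polynomial.aeval L q)
    have hp : p.totalDegree < n := mod_cast hp
    exact_mod_cast show (p * Polynomial.aeval L q).totalDegree < m by lia
  · rw [map_mul, ← hfp, ← MvPolynomial.coe_aeval_eq_eval, RingHom.coe_coe,
      ← Polynomial.aeval_algHom_apply, Polynomial.coe_aeval_eq_eval]
    exact congrArg (f y * Polynomial.eval · q) (hL y).symm

end PolynomialFunctions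

section Reproduction

variable {d : ℕ}

theorem exists_orthonormalBasis_zero_eq (x : Sph d) :
    ∃ b : OrthonormalBasis (Fin (d + 1)) ℝ (EuclideanSpace ℝ (Fin (d + 1))), b 0 = x := by
  obtain ⟨b, hb⟩ := Orthonormal.exists_orthonormalBasis_extension_of_card_eq (𝕜 := ℝ)
    (ι := Fin (d + 1)) (E := EuclideanSpace ℝ (Fin (d + 1))) (by simp)
    (v := fun _ => x) (s := {0}) ⟨by simp, fun i j hij => (hij (Subsingleton.elim i j)).elim⟩
  exact ⟨b, hb 0 rfl⟩

theorem integral_mul_sphK (hd : 2 ≤ d) {n : ℕ} {f : Sph d → ℝ} (hf : IsSphPoly d n f)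
    (x : Sph d) : ∫ y, f y * sphK d n (ip x y) ∂sphMeasure d = f x := by
  obtain ⟨b, hb⟩ := exists_orthonormalBasis_zero_eq x
  obtain ⟨q, hq, hfq⟩ := hf.exists_eval_repr b
  have hip (y : Sph d) : ip x y = b.repr y 0 := by rw [b.repr_apply_apply, hb, ip]
  have hx : b.repr x = EuclideanSpace.single 0 1 := by rw [← hb, b.repr_self]
  have hcont : Continuous (sphK d n) := by
    unfold sphK
    simp only [jacobiK_eq_eval]
    fun_prop
  simp only [hfq, hip, hx, MvPolynomial.eval_eq', Finset.sum_mul, mul_assoc]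
  rw [integral_finsetSum _ fun a _ => integrable_sphMeasure (by fun_prop)]
  refine Finset.sum_congr rfl fun a ha => ?_
  have hdeg : ∑ i, a i < n := by
    rw [← Finsupp.sum_fintype a (fun _ k => k) fun _ => rfl]
    exact (MvPolynomial.le_totalDegree ha).trans_lt (mod_cast hq)
  rw [integral_const_mul, integral_prod_repr_pow_mul_sphK b hd hdeg, Fin.prod_univ_succ]
  simp

theorem IsQuadrature.sInt_mul_sphK (hd : 2 ≤ d) {N : ℕ} {ν : SignedMeasure (Sph d)}
    (hν : IsQuadrature d (2 * N : ℕ) ν) {f : Sph d → ℝ} (hf : IsSphPoly d N f) (x : Sph d) :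
    sInt ν (fun y => f y * sphK d N (ip x y)) = f x := by
  set q := C (omegaS d / omegaS (d - 1)) *
    jacobiKernelPolynomial ((d : ℝ) / 2 - 1) ((d : ℝ) / 2 - 1) N
  have hq (t : ℝ) : sphK d N t = q.eval t := by
    rw [sphK, jacobiK_eq_eval, Polynomial.eval_mul, Polynomial.eval_C]
  have hqdeg : q.natDegree ≤ N :=
    (Polynomial.natDegree_C_mul_le _ _).trans (natDegree_jacobiKernelPolynomial_le ..)
  have hfq : IsSphPoly d (2 * N : ℕ) fun y => f y * sphK d N (ip x y) := by
    simpa only [hq] using hf.mul_eval_ip (show q.natDegree + N ≤ 2 * N by lia) x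
  rw [hν _ hfq, integral_mul_sphK hd hf]

theorem ip_self (x : Sph d) : ip x x = 1 := by
  rw [ip, real_inner_self_eq_norm_sq, norm_eq_of_mem_sphere, one_pow]

theorem IsQuadrature.sInt_mul_sphK_mul_eval_ip (hd : 2 ≤ d) {n N : ℕ} {ν : SignedMeasure (Sph d)}
    (hν : IsQuadrature d (2 * N : ℕ) ν) {f : Sph d → ℝ} (hf : IsSphPoly d n f) {q : ℝ[X]}
    (hq : q.natDegree + n ≤ N) (x : Sph d) :
    sInt ν (fun y => f y * (sphK d N (ip x y) * q.eval (ip x y))) = f x * q.eval 1 := by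
  rw [← ip_self x, ← hν.sInt_mul_sphK hd (hf.mul_eval_ip hq x) x]
  exact congrArg (sInt ν) (funext fun y => by ring)

end Reproduction

section Operators

/-- The polynomial by which `PhiTilde d n r` multiplies the reproducing kernel, normalized to the
value `1` at `1`. -/
def localizingFactor (d n : ℕ) (r : ℝ) : ℝ[X] :=
  C (jacobiP ((d : ℝ) / 2 + r) ((d : ℝ) / 2 - 2) (d * n) 1)⁻¹ *
    jacobiPolynomial ((d : ℝ) / 2 + r) ((d : ℝ) / 2 - 2) (d * n)

theorem phiTilde_eq (d n : ℕ) (r t : ℝ) :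
    PhiTilde d n r t = sphK d ((d + 2) * n) t * (localizingFactor d n r).eval t := by
  rw [PhiTilde, localizingFactor, Polynomial.eval_mul, Polynomial.eval_C, ← jacobiP_eq_eval,
    div_eq_inv_mul]

theorem phi_eq (d n : ℕ) (r t : ℝ) :
    Phi d n r t = sphK d ((d + 2) * n) t *
      (localizingFactor d n r * (C (1 / 2) * (1 + X)) ^ n).eval t := by
  simp only [Phi, phiTilde_eq, Polynomial.eval_mul, Polynomial.eval_pow, Polynomial.eval_C,
    Polynomial.eval_add, Polynomial.eval_one, Polynomial.eval_X]
  ring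

theorem natDegree_localizingFactor_le (d n : ℕ) (r : ℝ) :
    (localizingFactor d n r).natDegree ≤ d * n :=
  (Polynomial.natDegree_C_mul_le _ _).trans (natDegree_jacobiPolynomial_le ..)

theorem eval_one_localizingFactor {d n : ℕ} {r : ℝ} (hd : 2 ≤ d) (hr : -1 < (d : ℝ) / 2 + r)
    (hn : 0 < n) : (localizingFactor d n r).eval 1 = 1 := by
  have hdn : (2 : ℝ) ≤ (d * n : ℕ) := mod_cast hd.trans (Nat.le_mul_of_pos_right d hn)
  have hd : (2 : ℝ) ≤ d := mod_cast hd
  rw [localizingFactor, Polynomial.eval_mul, Polynomial.eval_C, ← jacobiP_eq_eval]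
  exact inv_mul_cancel₀ (jacobiP_one_pos hr (by linarith) (by linarith)).ne'

theorem sigmaOp_reproduces_general {d : ℕ} (hd : 2 ≤ d) {r : ℝ} (hr : -1 < (d : ℝ) / 2 + r)
    {n : ℕ} {P : Sph d → ℝ} (hP : IsSphPoly d n P) {ν : SignedMeasure (Sph d)}
    (hν : IsQuadrature d ((2 * (d + 2) * n : ℕ) : ℝ) ν) :
    (∀ x : Sph d, sigmaOp d n r ν P x = P x) ∧
      (∀ x : Sph d, sigmaTildeOp d n r ν P x = P x) := by
  have hn : 0 < n := by
    obtain ⟨p, hp, -⟩ := hP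
    exact Nat.zero_lt_of_lt (Nat.cast_lt.mp hp)
  have hdeg := natDegree_localizingFactor_le d n r
  have hone := eval_one_localizingFactor hd hr hn
  rw [mul_assoc] at hν
  refine ⟨fun x => ?_, fun x => ?_⟩
  · have hpow : ((C (1 / 2 : ℝ) * (1 + X)) ^ n).natDegree ≤ n := by compute_degree
    have hmul := Polynomial.natDegree_mul_le_of_le hdeg hpow
    simp only [sigmaOp, phi_eq]
    rw [hν.sInt_mul_sphK_mul_eval_ip hd hP (by lia), Polynomial.eval_mul, hone]
    norm_num
  · simp only [sigmaTildeOp, phiTilde_eq]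
    rw [hν.sInt_mul_sphK_mul_eval_ip hd hP (by lia), hone, mul_one]

end Operators

/-- If `ν` is a quadrature measure of order `2(d+2)n` and `P ∈ Π_n^d`, then
`σ_{d;n,r}(ν,P) = P` and `σ̃_{d;n,r}(ν,P) = P`. -/
theorem sigmaOp_reproduces (d : ℕ) (hd : 3 ≤ d) (r : ℝ) (hr : 0 < r) (n : ℕ) (hn : 0 < n)
    (P : Sph d → ℝ) (hP : IsSphPoly d n P)
    (ν : SignedMeasure (Sph d)) (hν : IsQuadrature d ((2 * (d + 2) * n : ℕ) : ℝ) ν) :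
    (∀ x : Sph d, sigmaOp d n r ν P x = P x) ∧
      (∀ x : Sph d, sigmaTildeOp d n r ν P x = P x) :=
  sigmaOp_reproduces_general (by lia) (neg_one_lt_zero.trans (by positivity)) hP hν

end
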